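/- arXiv:math/0610897 — 2 statements merged into one kernel-verified Lean document; each statement's English description precedes it below -/
import Mathlib

section
/- In the algebra R(f), the element Ω = 2FE + u(H+1) is central, i.e., it commutes with E, F, and H. -/
/-! The relations `HE = E(H+1)` and `(H+1)F = FH` extend from `H` to all polynomials in `H`, giving
`u(H)E = E u(H+1)` and `u(H+1)F = F u(H)`. Together with `2(EF - FE) = 2f(H) = u(H+1) - u(H)`,
the correction from moving `E` or `F` past `2FE` cancels the one from moving it past `u(H+1)`.
Commutation with `H` holds because `FE` has weight zero and polynomials in `H` commute. -/

open Polynomial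

inductive SmithGen : Type
  | E | F | H

open SmithGen in
inductive SmithRel (f : ℂ[X]) : FreeAlgebra ℂ SmithGen → FreeAlgebra ℂ SmithGen → Prop
  | ef : SmithRel f (FreeAlgebra.ι ℂ E * FreeAlgebra.ι ℂ F - FreeAlgebra.ι ℂ F * FreeAlgebra.ι ℂ E)
      (aeval (FreeAlgebra.ι ℂ H) f)
  | he : SmithRel f (FreeAlgebra.ι ℂ H * FreeAlgebra.ι ℂ E - FreeAlgebra.ι ℂ E * FreeAlgebra.ι ℂ H)
      (FreeAlgebra.ι ℂ E)
  | hf : SmithRel f (FreeAlgebra.ι ℂ H * FreeAlgebra.ι ℂ F - FreeAlgebra.ι ℂ F * FreeAlgebra.ι ℂ H)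
      (-FreeAlgebra.ι ℂ F)

/-- Smith's algebra `R(f)`, similar to `U(sl₂)`. -/
abbrev SmithAlgebra (f : ℂ[X]) : Type := RingQuot (SmithRel f)

noncomputable def SmithE (f : ℂ[X]) : SmithAlgebra f :=
  RingQuot.mkAlgHom ℂ (SmithRel f) (FreeAlgebra.ι ℂ SmithGen.E)

noncomputable def SmithF (f : ℂ[X]) : SmithAlgebra f :=
  RingQuot.mkAlgHom ℂ (SmithRel f) (FreeAlgebra.ι ℂ SmithGen.F)

noncomputable def SmithH (f : ℂ[X]) : SmithAlgebra f :=
  RingQuot.mkAlgHom ℂ (SmithRel f) (FreeAlgebra.ι ℂ SmithGen.H)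

/-- The Casimir element `Ω = 2FE + u(H+1)`. -/
noncomputable def SmithOmega (f u : ℂ[X]) : SmithAlgebra f :=
  2 * SmithF f * SmithE f + aeval (SmithH f) (u.comp (X + 1))

/-- An intertwining relation `a x = x b` extends to polynomials: `p(a) x = x p(b)`. -/
theorem aeval_mul_of_intertwine {A : Type*} [Ring A] [Algebra ℂ A] {a b x : A}
    (h : a * x = x * b) (p : ℂ[X]) : aeval a p * x = x * aeval b p := by
  induction p using Polynomial.induction_on' with
  | add p q hp hq => simp only [map_add, add_mul, mul_add, hp, hq]
  | monomial n c =>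
    have hn : a ^ n * x = x * b ^ n :=
      ((show SemiconjBy x b a from h.symm).pow_right n).eq.symm
    rw [aeval_monomial, aeval_monomial, mul_assoc, hn, Algebra.left_comm]

theorem smith_ef (f : ℂ[X]) :
    SmithE f * SmithF f - SmithF f * SmithE f = aeval (SmithH f) f := by
  have h := RingQuot.mkAlgHom_rel ℂ (SmithRel.ef (f := f))
  rw [map_sub, map_mul, map_mul, ← Polynomial.aeval_algHom_apply] at h
  exact h

theorem smith_he (f : ℂ[X]) :
    SmithH f * SmithE f - SmithE f * SmithH f = SmithE f := by
  have h := RingQuot.mkAlgHom_rel ℂ (SmithRel.he (f := f))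
  rw [map_sub, map_mul, map_mul] at h
  exact h

theorem smith_hf (f : ℂ[X]) :
    SmithH f * SmithF f - SmithF f * SmithH f = -SmithF f := by
  have h := RingQuot.mkAlgHom_rel ℂ (SmithRel.hf (f := f))
  rw [map_sub, map_mul, map_mul, map_neg] at h
  exact h

/-- The formal part of the computation, where `v`, `w`, `c` play the roles of `u(h+1)`, `u(h)`,
`f(h)`. -/
theorem casimir_commute {A : Type*} [Ring A] {e g h v w c : A}
    (hef : e * g - g * e = c) (he : h * e - e * h = e) (hf : h * g - g * h = -g)
    (h2f : 2 * c = v - w) (hE : w * e = e * v) (hF : v * g = g * w) (hH : v * h = h * v) :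
    Commute (2 * g * e + v) e ∧ Commute (2 * g * e + v) g ∧ Commute (2 * g * e + v) h := by
  refine ⟨?_, ?_, ?_⟩ <;> rw [commute_iff_lie_eq, Ring.lie_def]
  · have key : 2 * g * e * e - e * (2 * g * e) = -((2 * (e * g - g * e)) * e) := by noncomm_ring
    calc (2 * g * e + v) * e - e * (2 * g * e + v)
        = (2 * g * e * e - e * (2 * g * e)) + v * e - e * v := by noncomm_ring
      _ = 0 := by rw [key, hef, h2f, ← hE]; noncomm_ring
  · have key : 2 * g * e * g - g * (2 * g * e) = g * (2 * (e * g - g * e)) := by noncomm_ring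
    calc (2 * g * e + v) * g - g * (2 * g * e + v)
        = (2 * g * e * g - g * (2 * g * e)) + v * g - g * v := by noncomm_ring
      _ = 0 := by rw [key, hef, h2f, hF]; noncomm_ring
  · calc (2 * g * e + v) * h - h * (2 * g * e + v)
        = -(2 * (g * (h * e - e * h))) - 2 * ((h * g - g * h) * e) + (v * h - h * v) := by
          noncomm_ring
      _ = 0 := by rw [he, hf, hH]; noncomm_ring

/-- The Casimir element `Ω = 2FE + u(H+1)` is central in `R(f)`:
it commutes with `E`, `F` and `H`. -/
theorem smithOmega_central (f u : ℂ[X])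
    (hu : f = C (1/2 : ℂ) * (u.comp (X + 1) - u)) :
    Commute (SmithOmega f u) (SmithE f) ∧ Commute (SmithOmega f u) (SmithF f) ∧
      Commute (SmithOmega f u) (SmithH f) := by
  have hcomp : aeval (SmithH f) (u.comp (X + 1)) = aeval (SmithH f + 1) u := by
    simp [aeval_comp]
  have h2f : 2 * aeval (SmithH f) f = aeval (SmithH f + 1) u - aeval (SmithH f) u := by
    have hp : (2 : ℂ[X]) * f = u.comp (X + 1) - u := by
      have hc : (2 : ℂ[X]) * C (1/2 : ℂ) = 1 := by
        rw [show (2 : ℂ[X]) = C 2 from rfl, ← C_mul]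
        norm_num
      calc (2 : ℂ[X]) * f = 2 * (C (1/2 : ℂ) * (u.comp (X + 1) - u)) := congrArg _ hu
        _ = u.comp (X + 1) - u := by rw [← mul_assoc, hc, one_mul]
    have h := congrArg (aeval (SmithH f)) hp
    rw [map_mul, map_sub, hcomp, map_ofNat] at h
    exact h
  have hef := smith_ef f
  have he := smith_he f
  have hf := smith_hf f
  have hE : aeval (SmithH f) u * SmithE f = SmithE f * aeval (SmithH f + 1) u :=
    aeval_mul_of_intertwine (by rw [mul_add, mul_one, ← sub_eq_iff_eq_add', he]) u
  have hF : aeval (SmithH f + 1) u * SmithF f = SmithF f * aeval (SmithH f) u :=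
    aeval_mul_of_intertwine (by rw [add_mul, one_mul, ← sub_eq_zero, add_sub_right_comm, hf,
      neg_add_cancel]) u
  have hH : aeval (SmithH f + 1) u * SmithH f = SmithH f * aeval (SmithH f + 1) u :=
    aeval_mul_of_intertwine (by rw [add_mul, mul_add, one_mul, mul_one]) u
  unfold SmithOmega
  rw [hcomp]
  exact casimir_commute hef he hf h2f hE hF hH
end

section
/- Let (V, w) be a Whittaker module over R(f) whose central annihilator is Z_V = ⟨g^n⟩ for an irreducible polynomial g ∈ ℂ[Ω]. Setting V_i = R·g^i·w for i = 0, …, n, the quotients V_i/V_{i+1} are irreducible Whittaker modules of the same type η, and the chain V = V_0 ⊃ V_1 ⊃ ⋯ ⊃ V_n = 0 is a composition series; in particular V has finite length n. -/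
/-!
Every vector of `V` has the form `∑ Hᵏ aₖ(Ω) w`: such vectors are stable under `E` and `H`, and
also under `F`, because `F w = c⁻¹ F E w = (2c)⁻¹ (Ω - u(H + 1)) w` (`smul_whittaker_eq`).
On these vectors `c⁻¹ E` acts as the shift `H ↦ H - 1`, so the polynomials `P(Ω, H)` with
`P(Ω, H) w` in a given submodule `W` form a shift-stable ideal of `ℂ[z][x]`. Finite differences
show that such an ideal contains all the coefficients of its members (`all_coeff_mem`); hence `W`
contains `∑ Hᵏ aₖ(Ω) w` only if it contains every `aₖ(Ω) w` (`coeff_smul_mem`).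

Submodules of `V` are therefore controlled by ideals of `ℂ[Ω]`. The hypothesis on `Z_V`, together
with the transcendence of `Ω` (`aeval_omega_injective`), says that `q(Ω) w = 0` exactly when
`gⁿ ∣ q`. If `gⁱ w` were in `Vᵢ₊₁`, then `gⁱ⁺¹ ∣ gⁱ`, which is absurd. If `Vᵢ₊₁ < W ≤ Vᵢ`, then
`W` contains some `a(Ω) gⁱ w` with `a` prime to `g`, and a Bézout relation gives `gⁱ w ∈ W`.

Transcendence of `Ω` is read off a model of the universal Whittaker module on `ℂ[z][x]`, in which
`Ω` acts as multiplication by `z` (`modelGen`).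
-/

open Polynomial

/-! ### Relations in the Smith algebra and centrality of the Casimir element -/

theorem smith_induction {f : ℂ[X]} {motive : SmithAlgebra f → Prop}
    (scalar : ∀ a : ℂ, motive (algebraMap ℂ _ a))
    (hE : motive (SmithE f)) (hF : motive (SmithF f)) (hH : motive (SmithH f))
    (mul : ∀ a b, motive a → motive b → motive (a * b))
    (add : ∀ a b, motive a → motive b → motive (a + b)) (r : SmithAlgebra f) : motive r := by
  obtain ⟨a, rfl⟩ := RingQuot.mkAlgHom_surjective ℂ (SmithRel f) r
  induction a using FreeAlgebra.induction with
  | grade0 r => simpa only [AlgHom.commutes] using scalar r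
  | grade1 x => cases x <;> assumption
  | mul a b ha hb => rw [map_mul]; exact mul _ _ ha hb
  | add a b ha hb => rw [map_add]; exact add _ _ ha hb

theorem smith_EF (f : ℂ[X]) :
    SmithE f * SmithF f = SmithF f * SmithE f + aeval (SmithH f) f := by
  have h := RingQuot.mkAlgHom_rel ℂ (SmithRel.ef (f := f))
  rw [map_sub, map_mul, map_mul, ← aeval_algHom_apply] at h
  exact sub_eq_iff_eq_add'.1 h

theorem smith_EH (f : ℂ[X]) :
    SmithE f * SmithH f = (SmithH f - 1) * SmithE f := by
  have h := RingQuot.mkAlgHom_rel ℂ (SmithRel.he (f := f))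
  rw [map_sub, map_mul, map_mul] at h
  change SmithH f * SmithE f - SmithE f * SmithH f = SmithE f at h
  rw [sub_mul, one_mul, eq_sub_iff_add_eq, ← eq_sub_iff_add_eq']
  exact h.symm

theorem smith_FH (f : ℂ[X]) :
    SmithF f * SmithH f = (SmithH f + 1) * SmithF f := by
  have h := RingQuot.mkAlgHom_rel ℂ (SmithRel.hf (f := f))
  rw [map_sub, map_mul, map_mul, map_neg] at h
  change SmithH f * SmithF f - SmithF f * SmithH f = -SmithF f at h
  rw [add_mul, one_mul, ← sub_eq_iff_eq_add', ← neg_sub, h, neg_neg]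

/-- An element `y` that shifts the image of `X` by `r` and commutes with the scalars intertwines
every polynomial with its Taylor shift. -/
theorem shift_mul {S A : Type*} [CommRing S] [Ring A] (ψ : S[X] →+* A) (y : A) (r : S)
    (hC : ∀ s, Commute y (ψ (C s))) (hX : y * ψ X = (ψ X + ψ (C r)) * y) (P : S[X]) :
    y * ψ P = ψ (taylor r P) * y := by
  induction P using Polynomial.induction_on' with
  | add p q hp hq => rw [map_add, map_add, map_add, mul_add, add_mul, hp, hq]
  | monomial n a =>
    rw [taylor_monomial, ← C_mul_X_pow_eq_monomial, map_mul, map_mul, ← mul_assoc,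
      (hC a).eq, mul_assoc, mul_assoc]
    congr 1
    induction n with
    | zero => simp
    | succ n ih =>
      rw [pow_succ, map_mul, ← mul_assoc, ih, mul_assoc, hX, pow_succ, map_mul, map_add, mul_assoc]

theorem smith_E_aeval (f p : ℂ[X]) :
    SmithE f * aeval (SmithH f) p = aeval (SmithH f) (taylor (-1) p) * SmithE f := by
  refine shift_mul (aeval (SmithH f) : ℂ[X] →ₐ[ℂ] _).toRingHom (SmithE f) (-1) ?_ ?_ p
  · intro s; simpa using Algebra.commute_algebraMap_right s (SmithE f)
  · simpa [sub_eq_add_neg] using smith_EH f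

theorem smith_F_aeval (f p : ℂ[X]) :
    SmithF f * aeval (SmithH f) p = aeval (SmithH f) (taylor 1 p) * SmithF f := by
  refine shift_mul (aeval (SmithH f) : ℂ[X] →ₐ[ℂ] _).toRingHom (SmithF f) 1 ?_ ?_ p
  · intro s; simpa using Algebra.commute_algebraMap_right s (SmithF f)
  · simpa using smith_FH f

theorem comp_X_add_one {S : Type*} [CommRing S] (u : S[X]) : u.comp (X + 1) = taylor 1 u := by
  rw [taylor_apply, C_1]

-- The following three identities are stated in an abstract ring, which stands for `R(f)` with
-- `U = u(H)`, `U1 = u(H + 1)` and `D = f(H)`.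
section
variable {A : Type*} [Ring A] {E F H U U1 D : A}

theorem casimir_comm_E (hEF : E * F = F * E + D) (hE : E * U1 = U * E) (h2 : 2 * D = U1 - U) :
    (2 * F * E + U1) * E = E * (2 * F * E + U1) := by
  have h3 : D + D = U1 - U := by rw [← two_mul, h2]
  have h4 : E * (2 * F * E + U1) = (E * F) * E + (E * F) * E + E * U1 := by noncomm_ring
  have h5 : U1 = D + D + U := by rw [h3]; abel
  rw [h4, hEF, hE, h5]; noncomm_ring

theorem casimir_comm_F (hEF : E * F = F * E + D) (hF : F * U = U1 * F) (h2 : 2 * D = U1 - U) :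
    (2 * F * E + U1) * F = F * (2 * F * E + U1) := by
  have h3 : D + D = U1 - U := by rw [← two_mul, h2]
  have h4 : (2 * F * E + U1) * F = F * (E * F) + F * (E * F) + U1 * F := by noncomm_ring
  have h5 : U1 = D + D + U := by rw [h3]; abel
  rw [h4, hEF, ← hF, h5]; noncomm_ring

theorem casimir_comm_H (hEH : E * H = (H - 1) * E) (hFH : F * H = (H + 1) * F)
    (hH : H * U1 = U1 * H) : (2 * F * E + U1) * H = H * (2 * F * E + U1) := by
  have h4 : (2 * F * E + U1) * H = F * (E * H) + F * (E * H) + U1 * H := by noncomm_ring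
  have h5 : F * ((H - 1) * E) = (F * H) * E - F * E := by noncomm_ring
  rw [h4, hEH, h5, hFH, ← hH]; noncomm_ring
end

section
variable {f u : ℂ[X]} (hu : f = C (1/2 : ℂ) * (u.comp (X + 1) - u))
include hu

theorem two_smith_f : 2 * aeval (SmithH f) f =
    aeval (SmithH f) (u.comp (X + 1)) - aeval (SmithH f) u := by
  have : (2 : ℂ[X]) * f = u.comp (X + 1) - u := by
    have h2 : (2 : ℂ[X]) = C 2 := rfl
    rw [hu, ← mul_assoc, h2, ← C_mul]; norm_num
  rw [← map_sub, ← this, map_mul, map_ofNat]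

/-- The Casimir element is central: it commutes with each generator. -/
theorem omega_commute (r : SmithAlgebra f) : Commute (SmithOmega f u) r := by
  have h2 := two_smith_f hu
  have hEF := smith_EF f
  have hE1 : SmithE f * aeval (SmithH f) (u.comp (X + 1)) = aeval (SmithH f) u * SmithE f := by
    rw [smith_E_aeval, comp_X_add_one, taylor_taylor]; simp
  have hF1 : SmithF f * aeval (SmithH f) u = aeval (SmithH f) (u.comp (X + 1)) * SmithF f := by
    rw [smith_F_aeval, comp_X_add_one]
  have hEH := smith_EH f
  have hFH := smith_FH f
  have hH1 : SmithH f * aeval (SmithH f) (u.comp (X + 1))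
      = aeval (SmithH f) (u.comp (X + 1)) * SmithH f :=
    (Polynomial.commute_X _).map (aeval (SmithH f) : ℂ[X] →ₐ[ℂ] _) |>.eq |> fun h => by
      simpa using h
  induction r using smith_induction with
  | scalar a => exact (Algebra.commutes a _).symm
  | mul a b ha hb => exact ha.mul_right hb
  | add a b ha hb => exact ha.add_right hb
  | hE => exact casimir_comm_E hEF hE1 h2
  | hF => exact casimir_comm_F hEF hF1 h2
  | hH => exact casimir_comm_H hEH hFH hH1
end

/-! ### Transcendence of the Casimir element -/

/-- The multiplication action of `ℂ[z][x]` on itself, by `ℂ`-linear maps. -/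
noncomputable abbrev modelMul : ℂ[X][X] →ₐ[ℂ] Module.End ℂ ℂ[X][X] := Algebra.lmul ℂ ℂ[X][X]

/-- The shift `x ↦ x + r` on `ℂ[z][x]`, as a `ℂ`-linear map. -/
noncomputable abbrev modelShift (r : ℂ[X]) : Module.End ℂ ℂ[X][X] := (taylor r).restrictScalars ℂ

/-- The images of the generators in the universal Whittaker module of type `1`, realised on
`ℂ[z][x]` with `H` acting as `x` and `Ω` as `z`. -/
noncomputable def modelGen (u : ℂ[X]) : SmithGen → Module.End ℂ ℂ[X][X]
  | .E => modelShift (-1)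
  | .F => modelMul (C (C (1/2)) * (C X - (u.comp (X + 1)).map C)) * modelShift 1
  | .H => modelMul X

theorem aeval_modelMul (a : ℂ[X][X]) (p : ℂ[X]) :
    aeval (modelMul a) p = modelMul (aeval a p) := aeval_algHom_apply _ _ _

theorem aeval_X_eq_map (p : ℂ[X]) : aeval (X : ℂ[X][X]) p = p.map C := by
  induction p using Polynomial.induction_on' with
  | add p q hp hq => simp [hp, hq]
  | monomial n a => simp [aeval_monomial, C_mul_X_pow_eq_monomial, IsScalarTower.algebraMap_apply ℂ ℂ[X] ℂ[X][X]]

theorem aeval_CX_eq (p : ℂ[X]) : aeval (C X : ℂ[X][X]) p = C p := by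
  induction p using Polynomial.induction_on' with
  | add p q hp hq => simp [hp, hq]
  | monomial n a =>
    simp [← C_mul_X_pow_eq_monomial, IsScalarTower.algebraMap_apply ℂ ℂ[X] ℂ[X][X]]

theorem modelGen_rel {f u : ℂ[X]} (hu : f = C (1/2 : ℂ) * (u.comp (X + 1) - u))
    {a b : FreeAlgebra ℂ SmithGen} (h : SmithRel f a b) :
    FreeAlgebra.lift ℂ (modelGen u) a = FreeAlgebra.lift ℂ (modelGen u) b := by
  induction h with
  | ef =>
    rw [← aeval_algHom_apply]
    simp only [map_sub, map_mul, FreeAlgebra.lift_ι_apply, modelGen, aeval_modelMul, aeval_X_eq_map]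
    apply LinearMap.ext; intro P
    simp [taylor_mul, taylor_taylor, comp_X_add_one, hu]
    ring
  | he =>
    simp only [map_sub, map_mul, FreeAlgebra.lift_ι_apply, modelGen]
    apply LinearMap.ext; intro P
    simp [taylor_mul]
    ring
  | hf =>
    simp only [map_sub, map_mul, map_neg, FreeAlgebra.lift_ι_apply, modelGen]
    apply LinearMap.ext; intro P
    simp [taylor_mul]
    ring

/-- `Ω` is transcendental over `ℂ`: it acts on the universal Whittaker module as `z`. -/
theorem aeval_omega_injective {f u : ℂ[X]} (hu : f = C (1/2 : ℂ) * (u.comp (X + 1) - u)) :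
    Function.Injective (aeval (SmithOmega f u) : ℂ[X] → SmithAlgebra f) := by
  let ρ : SmithAlgebra f →ₐ[ℂ] Module.End ℂ ℂ[X][X] :=
    RingQuot.liftAlgHom ℂ ⟨FreeAlgebra.lift ℂ (modelGen u), fun _ _ h => modelGen_rel hu h⟩
  have hι (x) : ρ (RingQuot.mkAlgHom ℂ (SmithRel f) (FreeAlgebra.ι ℂ x)) = modelGen u x := by
    simp [ρ]
  have hΩ : ρ (SmithOmega f u) = modelMul (C X) := by
    unfold SmithOmega SmithE SmithF SmithH
    rw [map_add, map_mul, map_mul, ← aeval_algHom_apply, hι, hι, hι]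
    simp only [modelGen, aeval_modelMul, aeval_X_eq_map]
    have h2 : (2 : ℂ[X][X]) * C (C (1/2)) = 1 := by
      have : (2 : ℂ[X][X]) = C (C 2) := rfl
      rw [this, ← C_mul, ← C_mul]; norm_num
    apply LinearMap.ext; intro P
    have e : ρ 2 = modelMul 2 := (map_ofNat ρ 2).trans (map_ofNat modelMul 2).symm
    rw [e]
    simp [taylor_taylor, -one_div]
    linear_combination (C X - Polynomial.map C (u.comp (X + 1))) * P * h2
  intro p q h
  have := congrArg (fun r => ρ r 1) h
  simp only [← aeval_algHom_apply, hΩ, aeval_modelMul, aeval_CX_eq] at this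
  simpa using this

/-! ### Shift-stable ideals of `ℂ[z][x]` -/

/-- A shift-stable ideal contains the leading coefficient of each of its members. The difference
`P(x - 1) - P(x)` lowers the degree and multiplies the leading coefficient by `-deg P`, which is
a unit. -/
theorem coeff_mem_of_shift_stable (N : Ideal ℂ[X][X])
    (hN : ∀ P ∈ N, taylor (-1) P ∈ N) (d : ℕ) :
    ∀ P ∈ N, P.natDegree ≤ d → C (P.coeff d) ∈ N := by
  induction d with
  | zero => intro P hP hd; rwa [← eq_C_of_natDegree_le_zero hd]
  | succ d ih =>
    intro P hP hd
    -- `natDegree P` may be less than `d + 1`, but this formula only needs it as an upper bound.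
    have hc : (taylor (-1) P).coeff d = P.coeff d - (d + 1) * P.coeff (d + 1) := by
      rw [taylor_coeff, eval_eq_sum_range' (n := 2)]
      · simp [Finset.sum_range_succ, hasseDeriv_coeff, add_comm 1 d]; ring
      · have := natDegree_hasseDeriv_le P d
        omega
    have hlead : (taylor (-1) P).coeff (d + 1) = P.coeff (d + 1) := by
      rcases hd.eq_or_lt with h | h
      · rw [← h, coeff_taylor_natDegree]; rfl
      · rw [coeff_eq_zero_of_natDegree_lt h, coeff_eq_zero_of_natDegree_lt]
        rwa [natDegree_taylor]
    have hQ : (taylor (-1) P - P).natDegree ≤ d := by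
      rw [natDegree_le_iff_coeff_eq_zero]
      intro m hm
      rcases (Nat.succ_le_of_lt hm).eq_or_lt with rfl | h
      · rw [coeff_sub, hlead, sub_self]
      · rw [coeff_sub, coeff_eq_zero_of_natDegree_lt, coeff_eq_zero_of_natDegree_lt, sub_self]
        · omega
        · rw [natDegree_taylor]; omega
    have h1 := ih _ (N.sub_mem (hN P hP) hP) hQ
    rw [coeff_sub, hc] at h1
    have h2 := N.mul_mem_left (C (C (-((d : ℂ) + 1)⁻¹))) h1
    have hd0 : (d : ℂ) + 1 ≠ 0 := by exact_mod_cast d.succ_ne_zero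
    convert h2 using 1
    rw [← C_mul]
    congr 1
    have : ((d : ℂ[X]) + 1) = C ((d : ℂ) + 1) := by simp
    have h3 : C (-((d : ℂ) + 1)⁻¹) * C ((d : ℂ) + 1) = -1 := by
      rw [← C_mul, neg_mul, inv_mul_cancel₀ hd0]; simp
    rw [this]
    linear_combination P.coeff (d + 1) * h3

/-- A shift-stable ideal of `ℂ[z][x]` is extended from `ℂ[z]`: it contains every coefficient of
its elements. -/
theorem all_coeff_mem (N : Ideal ℂ[X][X]) (hN : ∀ P ∈ N, taylor (-1) P ∈ N)
    (P : ℂ[X][X]) (hP : P ∈ N) (k : ℕ) : C (P.coeff k) ∈ N := by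
  suffices ∀ d, ∀ P ∈ N, P.natDegree ≤ d → ∀ k, C (P.coeff k) ∈ N from this _ P hP le_rfl k
  intro d
  induction d with
  | zero =>
    intro P hP hd k
    rcases k with _ | k
    · exact coeff_mem_of_shift_stable N hN 0 P hP hd
    · rw [coeff_eq_zero_of_natDegree_lt (by omega)]; simp
  | succ d ih =>
    intro P hP hd k
    have hl := coeff_mem_of_shift_stable N hN _ P hP hd
    by_cases hk : k = d + 1
    · rw [hk]; exact hl
    have := ih (P - C (P.coeff (d + 1)) * X ^ (d + 1))
      (N.sub_mem hP (N.mul_mem_right _ hl)) (by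
        rw [natDegree_le_iff_coeff_eq_zero]
        intro m hm
        rw [coeff_sub, coeff_C_mul_X_pow]
        split_ifs with h
        · rw [h, sub_self]
        · rw [coeff_eq_zero_of_natDegree_lt (by omega), sub_zero]) k
    rwa [coeff_sub, coeff_C_mul_X_pow, if_neg hk, sub_zero] at this

/-! ### Whittaker modules -/

/-- The ring homomorphism `ℂ[z][x] → R(f)`, `z ↦ Ω`, `x ↦ H`. -/
noncomputable def borelHom {f u : ℂ[X]} (hu : f = C (1/2 : ℂ) * (u.comp (X + 1) - u)) :
    ℂ[X][X] →+* SmithAlgebra f :=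
  eval₂RingHom' (aeval (SmithOmega f u) : ℂ[X] →ₐ[ℂ] _).toRingHom (SmithH f) fun a => by
    show Commute (aeval (SmithOmega f u) a) _
    induction a using Polynomial.induction_on' with
    | add p q hp hq => rw [map_add]; exact hp.add_left hq
    | monomial n a =>
      rw [aeval_monomial]
      exact (Algebra.commute_algebraMap_left _ _).mul_left ((omega_commute hu _).pow_left _)

section
variable {f u : ℂ[X]} (hu : f = C (1/2 : ℂ) * (u.comp (X + 1) - u))

theorem borelHom_C (p : ℂ[X]) : borelHom hu (C p) = aeval (SmithOmega f u) p :=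
  eval₂_C _ _

theorem borelHom_X : borelHom hu X = SmithH f := eval₂_X _ _

theorem borelHom_map (p : ℂ[X]) : borelHom hu (p.map C) = aeval (SmithH f) p := by
  induction p using Polynomial.induction_on' with
  | add p q hp hq => rw [Polynomial.map_add, map_add, hp, hq, map_add]
  | monomial n a =>
    rw [map_monomial, ← C_mul_X_pow_eq_monomial, map_mul, map_pow, borelHom_C, borelHom_X,
      aeval_C, aeval_monomial]

include hu in
theorem aeval_omega_commute (p : ℂ[X]) (r : SmithAlgebra f) :
    Commute (aeval (SmithOmega f u) p) r := by
  induction p using Polynomial.induction_on' with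
  | add p q hp hq => rw [map_add]; exact hp.add_left hq
  | monomial n a =>
    rw [aeval_monomial]
    exact (Algebra.commute_algebraMap_left _ _).mul_left ((omega_commute hu _).pow_left _)

theorem E_borelHom (P : ℂ[X][X]) :
    SmithE f * borelHom hu P = borelHom hu (taylor (-1) P) * SmithE f := by
  refine shift_mul (borelHom hu) _ _ (fun s => ?_) ?_ P
  · rw [borelHom_C]; exact (aeval_omega_commute hu _ _).symm
  · rw [borelHom_X, borelHom_C, smith_EH]; simp [sub_eq_add_neg]

theorem F_borelHom (P : ℂ[X][X]) :
    SmithF f * borelHom hu P = borelHom hu (taylor 1 P) * SmithF f := by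
  refine shift_mul (borelHom hu) _ _ (fun s => ?_) ?_ P
  · rw [borelHom_C]; exact (aeval_omega_commute hu _ _).symm
  · rw [borelHom_X, borelHom_C, smith_FH]; simp

variable {c : ℂ} (hc : c ≠ 0) {V : Type} [AddCommGroup V] [Module (SmithAlgebra f) V] {w : V}
    (hw : SmithE f • w = algebraMap ℂ (SmithAlgebra f) c • w)
include hc hw

/-- `F w = (2c)⁻¹ (Ω - u(H + 1)) w`, since `2FE = Ω - u(H + 1)` and `E w = c w`. -/
theorem F_smul_whittaker : SmithF f • w =
    borelHom hu (C (C (1/2 * c⁻¹)) * (C X - (u.comp (X + 1)).map C)) • w := by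
  rw [map_mul, map_sub, borelHom_C, borelHom_C, borelHom_map, aeval_X, aeval_C]
  have h : SmithOmega f u - aeval (SmithH f) (u.comp (X + 1)) = 2 * SmithF f * SmithE f := by
    unfold SmithOmega; abel
  have h2 : (2 : SmithAlgebra f) = algebraMap ℂ _ 2 := (map_ofNat _ 2).symm
  have h3 : (1 / 2 * c⁻¹) * (2 * c) = 1 := by field_simp
  rw [h, mul_smul, mul_smul _ (SmithE f), hw, ← mul_smul _ _ w, mul_assoc, ← Algebra.commutes,
    ← mul_assoc, h2, ← map_mul, ← mul_smul, ← mul_assoc, ← map_mul, h3, map_one, one_mul]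

/-- The cyclic module `R w` consists of the vectors `P(Ω, H) w`: these are stable under the
generators of `R(f)`. -/
theorem smul_whittaker_eq (r : SmithAlgebra f) : ∃ P, r • w = borelHom hu P • w := by
  suffices ∀ Q, ∃ P, r • borelHom hu Q • w = borelHom hu P • w by simpa using this 1
  induction r using smith_induction with
  | scalar a =>
    intro Q
    refine ⟨C (C a) * Q, ?_⟩
    rw [map_mul, borelHom_C, aeval_C, mul_smul]
  | hE =>
    intro Q
    refine ⟨taylor (-1) Q * C (C c), ?_⟩
    rw [← mul_smul, E_borelHom, mul_smul, hw, map_mul, borelHom_C, aeval_C, mul_smul]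
  | hF =>
    intro Q
    refine ⟨taylor 1 Q * (C (C (1/2 * c⁻¹)) * (C X - (u.comp (X + 1)).map C)), ?_⟩
    rw [← mul_smul, F_borelHom, mul_smul, F_smul_whittaker hu hc hw, ← mul_smul, ← map_mul (borelHom hu)]
  | hH =>
    intro Q
    refine ⟨X * Q, ?_⟩
    rw [map_mul, borelHom_X, mul_smul]
  | mul a b ha hb =>
    intro Q
    obtain ⟨P, hP⟩ := hb Q
    obtain ⟨P', hP'⟩ := ha P
    exact ⟨P', by rw [mul_smul, hP, hP']⟩
  | add a b ha hb =>
    intro Q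
    obtain ⟨P, hP⟩ := hb Q
    obtain ⟨P', hP'⟩ := ha Q
    exact ⟨P' + P, by rw [add_smul, hP, hP', map_add, add_smul]⟩

/-- A submodule containing `∑ Hᵏ aₖ(Ω) w` contains each `aₖ(Ω) w`: the polynomials mapping `w`
into it form an ideal, which is shift-stable because `c⁻¹ E` acts as the shift. -/
theorem coeff_smul_mem (W : Submodule (SmithAlgebra f) V) (P : ℂ[X][X])
    (hP : borelHom hu P • w ∈ W) (k : ℕ) : aeval (SmithOmega f u) (P.coeff k) • w ∈ W := by
  let N : Ideal ℂ[X][X] :=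
    { carrier := {P | borelHom hu P • w ∈ W}
      zero_mem' := by simp
      add_mem' := fun {a b} ha hb => by
        show borelHom hu (a + b) • w ∈ W
        rw [map_add, add_smul]; exact W.add_mem ha hb
      smul_mem' := fun a b hb => by
        show borelHom hu (a * b) • w ∈ W
        rw [map_mul, mul_smul]; exact W.smul_mem _ hb }
  rw [← borelHom_C hu]
  refine all_coeff_mem N (fun Q hQ => ?_) P hP k
  show borelHom hu (taylor (-1) Q) • w ∈ W
  have h : (algebraMap ℂ (SmithAlgebra f) c⁻¹ * SmithE f) • borelHom hu Q • w ∈ W :=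
    W.smul_mem _ hQ
  rw [mul_smul, ← mul_smul (SmithE f), E_borelHom, mul_smul _ (SmithE f), hw, ← mul_smul _ _ w,
    ← Algebra.commutes, ← mul_smul, ← mul_assoc, ← map_mul, inv_mul_cancel₀ hc, map_one,
    one_mul] at h
  exact h
end

/-- Let `(V, w)` be a Whittaker module whose central annihilator is `Z_V = ⟨gⁿ⟩` for an
irreducible polynomial `g ∈ ℂ[Ω]` (the center of `R(f)` being `ℂ[Ω]`).  With
`Vᵢ = R·gⁱ·w`, the chain `V = V₀ ⊃ V₁ ⊃ ⋯ ⊃ Vₙ = 0` is a composition series: each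
`Vᵢ₊₁ ⋖ Vᵢ` (i.e. each factor `Vᵢ/Vᵢ₊₁` is a simple module), and each factor is a
Whittaker module of the same type `η`, generated by the class of the Whittaker vector
`gⁱ·w`.  In particular `V` has finite length `n`. -/
theorem smith_whittaker_composition_series (f u : ℂ[X])
    (hu : f = C (1/2 : ℂ) * (u.comp (X + 1) - u)) (c : ℂ) (hc : c ≠ 0)
    (V : Type) [AddCommGroup V] [Module (SmithAlgebra f) V] (w : V)
    (hw : SmithE f • w = algebraMap ℂ (SmithAlgebra f) c • w)
    (hcyc : ∀ v : V, ∃ r : SmithAlgebra f, v = r • w)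
    (g : ℂ[X]) (hg : Irreducible g) (n : ℕ) (hn : 1 ≤ n)
    (hZV : {z : SmithAlgebra f | z ∈ Subalgebra.center ℂ (SmithAlgebra f) ∧ ∀ v : V, z • v = 0}
        = {z : SmithAlgebra f | ∃ p : ℂ[X], z = aeval (SmithOmega f u) (g ^ n * p)}) :
    ∃ Vi : ℕ → Submodule (SmithAlgebra f) V,
      (∀ i : ℕ, Vi i = Submodule.span (SmithAlgebra f) {(aeval (SmithOmega f u) g ^ i) • w}) ∧
      Vi 0 = ⊤ ∧ Vi n = ⊥ ∧
      (∀ i < n, Vi (i + 1) ⋖ Vi i) ∧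
      (∀ i < n,
        SmithE f • ((aeval (SmithOmega f u) g ^ i) • w) -
          algebraMap ℂ (SmithAlgebra f) c • ((aeval (SmithOmega f u) g ^ i) • w)
            ∈ Vi (i + 1)) := by
  set Ω := SmithOmega f u
  have hcomm (p : ℂ[X]) (r : SmithAlgebra f) : aeval Ω p * r = r * aeval Ω p :=
    aeval_omega_commute hu p r
  -- A polynomial in `Ω` kills `w` exactly when it is a multiple of `g ^ n`.
  have hann (q : ℂ[X]) : aeval Ω q • w = 0 ↔ g ^ n ∣ q := by
    have hset := Set.ext_iff.1 hZV (aeval Ω q)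
    constructor
    · intro h
      obtain ⟨p, hp⟩ := hset.1 ⟨Subalgebra.mem_center_iff.2 fun r => (hcomm q r).symm, fun v => by
        obtain ⟨r, rfl⟩ := hcyc v
        rw [← mul_smul, hcomm, mul_smul, h, smul_zero]⟩
      exact ⟨p, aeval_omega_injective hu hp⟩
    · rintro ⟨p, rfl⟩
      exact (hset.2 ⟨p, rfl⟩).2 w
  have hmem (i : ℕ) (v : V) (hv : v ∈ Submodule.span (SmithAlgebra f) {(aeval Ω g ^ i) • w}) :
      ∃ P : ℂ[X][X], v = borelHom hu (P * C (g ^ i)) • w := by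
    obtain ⟨r, rfl⟩ := Submodule.mem_span_singleton.1 hv
    obtain ⟨P, hP⟩ := smul_whittaker_eq hu hc hw r
    refine ⟨P, ?_⟩
    rw [mul_comm, map_mul, borelHom_C, mul_smul, ← hP, ← mul_smul, ← mul_smul, hcomm, map_pow]
  have hgen (i : ℕ) (W : Submodule (SmithAlgebra f) V) :
      Submodule.span (SmithAlgebra f) {(aeval Ω g ^ i) • w} ≤ W ↔ aeval Ω (g ^ i) • w ∈ W := by
    rw [Submodule.span_singleton_le_iff_mem, map_pow]
  refine ⟨fun i => Submodule.span _ {(aeval Ω g ^ i) • w}, fun i => rfl, ?_, ?_, ?_, ?_⟩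
  · rw [eq_top_iff]
    intro v _
    obtain ⟨r, rfl⟩ := hcyc v
    show r • w ∈ Submodule.span (SmithAlgebra f) {(aeval Ω g ^ 0) • w}
    rw [pow_zero, one_smul]
    exact Submodule.smul_mem _ _ (Submodule.mem_span_singleton_self w)
  · show Submodule.span (SmithAlgebra f) {(aeval Ω g ^ n) • w} = ⊥
    rw [← map_pow, (hann _).2 dvd_rfl, Submodule.span_zero_singleton]
  · intro i hi
    have hle : Submodule.span (SmithAlgebra f) {(aeval Ω g ^ (i + 1)) • w} ≤
        Submodule.span (SmithAlgebra f) {(aeval Ω g ^ i) • w} := by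
      rw [Submodule.span_singleton_le_iff_mem, pow_succ', mul_smul]
      exact Submodule.smul_mem _ _ (Submodule.mem_span_singleton_self _)
    rw [covBy_iff_lt_and_eq_or_eq]
    refine ⟨lt_of_le_not_ge hle fun h => ?_, fun W h1 h2 => ?_⟩
    · obtain ⟨P, hP⟩ := hmem (i + 1) _ ((hgen i _).1 h)
      -- The constant coefficient of `gⁱ - P gⁱ⁺¹` annihilates `w`.
      have h0 : borelHom hu (C (g ^ i) - P * C (g ^ (i + 1))) • w ∈
          (⊥ : Submodule (SmithAlgebra f) V) := by
        rw [map_sub, sub_smul, borelHom_C, ← hP, sub_self]; exact zero_mem _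
      have h3 := (hann _).1 ((Submodule.mem_bot _).1 (coeff_smul_mem hu hc hw _ _ h0 0))
      rw [coeff_sub, coeff_C_zero, coeff_mul_C] at h3
      have h4 : g ^ (i + 1) ∣ g ^ i :=
        (dvd_sub_left (Dvd.intro_left _ rfl)).1 ((pow_dvd_pow g hi).trans h3)
      exact absurd ((pow_dvd_pow_iff hg.ne_zero hg.not_isUnit).1 h4) (by omega)
    · by_cases hW : W ≤ Submodule.span (SmithAlgebra f) {(aeval Ω g ^ (i + 1)) • w}
      · exact Or.inl (le_antisymm hW h1)
      right
      refine le_antisymm h2 ((hgen i W).2 ?_)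
      obtain ⟨v, hv, hv'⟩ := Set.not_subset.1 hW
      obtain ⟨P, rfl⟩ := hmem i v (h2 hv)
      -- Some coefficient of `P` is prime to `g`, for otherwise `v` would lie in `V_{i+1}`.
      have hk : ∃ k, ¬ g ∣ P.coeff k := by
        by_contra! hall
        obtain ⟨Q, rfl⟩ := (C_dvd_iff_dvd_coeff g P).2 hall
        apply hv'
        have : C g * Q * C (g ^ i) = Q * C (g ^ (i + 1)) := by rw [pow_succ, C_mul]; ring
        rw [this, map_mul, borelHom_C, mul_smul, map_pow]
        exact Submodule.smul_mem _ _ (Submodule.mem_span_singleton_self _)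
      obtain ⟨k, hk⟩ := hk
      have hmemk := coeff_smul_mem hu hc hw W _ hv k
      rw [coeff_mul_C] at hmemk
      obtain ⟨s, t, hst⟩ := (hg.coprime_iff_not_dvd.2 hk)
      have hid : g ^ i = s * g ^ (i + 1) + t * (P.coeff k * g ^ i) := by
        linear_combination -g ^ i * hst
      rw [hid, map_add, map_mul, map_mul _ t, add_smul, mul_smul, mul_smul]
      exact W.add_mem (W.smul_mem _ ((hgen (i + 1) W).1 h1)) (W.smul_mem _ hmemk)
  · intro i _
    have : SmithE f • ((aeval Ω g ^ i) • w) =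
        algebraMap ℂ (SmithAlgebra f) c • ((aeval Ω g ^ i) • w) := by
      rw [← map_pow, ← mul_smul, ← hcomm, mul_smul, hw, ← mul_smul, hcomm, mul_smul]
    rw [this, sub_self]
    exact zero_mem _
end
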